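/- Let 2 ≤ k < n and let H ∈ Herm(n) satisfy λ_k(H) < λ_{k+1}(H). Then H_Σ belongs to Σ_k and is the unique closest point of Σ_k to H in Frobenius distance: for every G ∈ Σ_k with G ≠ H_Σ one has ‖H − G‖ > ‖H − H_Σ‖. -/

import Mathlib

open Matrix

noncomputable section

/-- Sorted eigenvalues (increasing, counted with multiplicity) of a Hermitian matrix
(junk value for non-Hermitian matrices). -/
def eigs {n : ℕ} (H : Matrix (Fin n) (Fin n) ℂ) : Fin n → ℝ :=
  if hH : H.IsHermitian then hH.eigenvalues ∘ Tuple.sort hH.eigenvalues else fun _ => 0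

/-- Frobenius norm of a complex matrix. -/
def frobNorm {n : ℕ} (M : Matrix (Fin n) (Fin n) ℂ) : ℝ :=
  Real.sqrt (∑ a, ∑ b, ‖M a b‖ ^ 2)

/-- Mean of the lowest k eigenvalues. -/
def lamBar {n : ℕ} (k : ℕ) (H : Matrix (Fin n) (Fin n) ℂ) : ℝ :=
  (∑ j : Fin n, if (j : ℕ) < k then eigs H j else 0) / k

/-- Standard deviation of the lowest k eigenvalues. -/
def Dk {n : ℕ} (k : ℕ) (H : Matrix (Fin n) (Fin n) ℂ) : ℝ :=
  Real.sqrt ((∑ j : Fin n, if (j : ℕ) < k then (eigs H j - lamBar k H) ^ 2 else 0) / k)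

/-- `Λ_Σ`: the diagonal of sorted eigenvalues, with the lowest k entries replaced
by their mean. -/
def LambdaSigma {n : ℕ} (k : ℕ) (H : Matrix (Fin n) (Fin n) ℂ) : Matrix (Fin n) (Fin n) ℂ :=
  Matrix.diagonal fun i => if (i : ℕ) < k then (lamBar k H : ℂ) else (eigs H i : ℂ)

/-- The set Σ_k of k-fold ground-state degenerate Hermitian matrices:
λ₁ = … = λ_k < λ_{k+1}. -/
def SigmaSet (n k : ℕ) : Set (Matrix (Fin n) (Fin n) ℂ) :=
  {H | H.IsHermitian ∧ (∀ i j : Fin n, (i : ℕ) < k → (j : ℕ) < k → eigs H i = eigs H j) ∧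
    ∀ i j : Fin n, (i : ℕ) < k → (j : ℕ) = k → eigs H i < eigs H j}

/-!
Write `H = U Λ U⁻¹` and `G = V M V⁻¹` with sorted spectra `l`, `m`, and let `D i j = |(U⁻¹V) i j|²`,
a doubly stochastic matrix. Then `‖H - G‖² = l·l + m·m - 2 l·Dm`, and `a·Dm ≤ a·m` whenever `a` and
`m` are both increasing (Birkhoff and the rearrangement inequality). The spectrum `s` of `H_Σ` is
the orthogonal projection of `l` onto the vectors with equal lowest `k` entries, and because of the
gap, `l - ε s` is still increasing for some `0 < ε ≤ 1`. Applying the inequality to `a = l - ε s`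
and Pythagoras to `l, s, m` gives the stability estimate
`‖H - H_Σ‖² + ε ‖H_Σ - G‖² ≤ ‖H - G‖²`.
-/

open scoped BigOperators

section DoublyStochastic

variable {ι R : Type*} [Fintype ι] [DecidableEq ι]
  [Field R] [LinearOrder R] [IsStrictOrderedRing R] {D : Matrix ι ι R} {a b : ι → R}

theorem dotProduct_mulVec_le_of_monovary (hD : D ∈ doublyStochastic R ι) (hab : Monovary a b) :
    a ⬝ᵥ D *ᵥ b ≤ a ⬝ᵥ b := by
  have hlin : IsLinearMap R fun D : Matrix ι ι R ↦ a ⬝ᵥ D *ᵥ b :=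
    ⟨fun D D' ↦ by rw [add_mulVec, dotProduct_add],
      fun c D ↦ by rw [smul_mulVec, dotProduct_smul]⟩
  have hperm : {σ.permMatrix R | σ : Equiv.Perm ι} ⊆ {D | a ⬝ᵥ D *ᵥ b ≤ a ⬝ᵥ b} := by
    rintro _ ⟨σ, rfl⟩
    rw [Set.mem_ofPred_eq, permMatrix_mulVec]
    exact hab.sum_mul_comp_perm_le_sum_mul
  rw [← SetLike.mem_coe, doublyStochastic_eq_convexHull_permMatrix] at hD
  exact convexHull_min hperm (convex_halfSpace_le hlin _) hD

theorem sum_sum_mul_sub_sq_of_mem_doublyStochastic (hD : D ∈ doublyStochastic R ι) (a b : ι → R) :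
    ∑ i, ∑ j, D i j * (a i - b j) ^ 2 = a ⬝ᵥ a + b ⬝ᵥ b - 2 * (a ⬝ᵥ D *ᵥ b) := by
  have hrow : ∑ i, ∑ j, D i j * a i ^ 2 = a ⬝ᵥ a := by
    simp only [← Finset.sum_mul, sum_row_of_mem_doublyStochastic hD, one_mul, sq, dotProduct]
  have hcol : ∑ i, ∑ j, D i j * b j ^ 2 = b ⬝ᵥ b := by
    rw [Finset.sum_comm]
    simp only [← Finset.sum_mul, sum_col_of_mem_doublyStochastic hD, one_mul, sq, dotProduct]
  have hcross : ∑ i, ∑ j, D i j * (a i * b j) = a ⬝ᵥ D *ᵥ b := by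
    simp only [dotProduct, mulVec, Finset.mul_sum, mul_left_comm]
  rw [← hrow, ← hcol, ← hcross, Finset.mul_sum]
  simp only [Finset.mul_sum, ← Finset.sum_add_distrib, ← Finset.sum_sub_distrib]
  exact Finset.sum_congr rfl fun i _ ↦ Finset.sum_congr rfl fun j _ ↦ by ring

end DoublyStochastic

section Flatten

variable {ι : Type*} [LinearOrder ι] [LocallyFiniteOrderBot ι] {a b : ι} {l : ι → ℝ}

/-- The vector `l` with its entries below the index `a` replaced by their mean. On spectra this is
the passage from `H` to `H_Σ`. -/
def flattenBelow (a : ι) (l : ι → ℝ) : ι → ℝ :=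
  fun i ↦ if i < a then 𝔼 j ∈ Finset.Iio a, l j else l i

theorem flattenBelow_of_lt {i : ι} (h : i < a) : flattenBelow a l i = 𝔼 j ∈ Finset.Iio a, l j :=
  if_pos h

theorem flattenBelow_of_le {i : ι} (h : a ≤ i) : flattenBelow a l i = l i :=
  if_neg h.not_gt

theorem sub_flattenBelow_dotProduct_eq_zero [Fintype ι] {v : ι → ℝ} {c : ℝ}
    (hv : ∀ i < a, v i = c) : (l - flattenBelow a l) ⬝ᵥ v = 0 := by
  have hsupp : ∑ i ∈ Finset.Iio a, (l - flattenBelow a l) i * v i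
      = (l - flattenBelow a l) ⬝ᵥ v := by
    refine Finset.sum_subset (Finset.subset_univ _) fun i _ hi ↦ ?_
    rw [Finset.mem_Iio, not_lt] at hi
    rw [Pi.sub_apply, flattenBelow_of_le hi, sub_self, zero_mul]
  calc (l - flattenBelow a l) ⬝ᵥ v
      = ∑ i ∈ Finset.Iio a, (l i - 𝔼 j ∈ Finset.Iio a, l j) * c := by
        rw [← hsupp]
        refine Finset.sum_congr rfl fun i hi ↦ ?_
        rw [Finset.mem_Iio] at hi
        rw [Pi.sub_apply, flattenBelow_of_lt hi, hv i hi]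
    _ = 0 := by
        rw [← Finset.sum_mul, Finset.sum_sub_distrib, Finset.sum_const, Finset.card_smul_expect,
          sub_self, zero_mul]

theorem expect_Iio_le_of_covBy (hl : Monotone l) (hba : b ⋖ a) :
    𝔼 j ∈ Finset.Iio a, l j ≤ l b :=
  Finset.expect_le ⟨b, Finset.mem_Iio.mpr hba.lt⟩ fun _ hj ↦
    hl (hba.le_of_lt (Finset.mem_Iio.mp hj))

theorem exists_monotone_sub_smul_flattenBelow (hl : Monotone l) (hba : b ⋖ a) (hgap : l b < l a) :
    ∃ ε ∈ Set.Ioc (0 : ℝ) 1, Monotone (l - ε • flattenBelow a l) := by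
  set μ := 𝔼 j ∈ Finset.Iio a, l j with hμ
  have hμb : μ ≤ l b := expect_Iio_le_of_covBy hl hba
  have hμa : 0 < l a - μ := by linarith
  -- This `ε` makes the two sides of the gap meet: `l b - ε * μ = (1 - ε) * l a`.
  set ε := (l a - l b) / (l a - μ)
  have hε : ε * (l a - μ) = l a - l b := div_mul_cancel₀ _ hμa.ne'
  have hε₁ : ε ≤ 1 := (div_le_one hμa).mpr (by linarith)
  refine ⟨ε, ⟨div_pos (by linarith) hμa, hε₁⟩, fun i j hij ↦ ?_⟩
  have hlij := hl hij
  simp only [Pi.sub_apply, Pi.smul_apply, smul_eq_mul]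
  obtain hj | hj := lt_or_ge j a
  · rw [flattenBelow_of_lt hj, flattenBelow_of_lt (hij.trans_lt hj)]
    linarith
  rw [flattenBelow_of_le hj]
  obtain hi | hi := lt_or_ge i a
  · rw [flattenBelow_of_lt hi, ← hμ]
    have hlib : l i ≤ l b := hl (hba.le_of_lt hi)
    have hlaj : (1 - ε) * l a ≤ (1 - ε) * l j :=
      mul_le_mul_of_nonneg_left (hl hj) (sub_nonneg.mpr hε₁)
    linarith
  · rw [flattenBelow_of_le hi]
    linarith [mul_le_mul_of_nonneg_left hlij (sub_nonneg.mpr hε₁)]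

theorem monotone_flattenBelow (hl : Monotone l) (hba : b ⋖ a) : Monotone (flattenBelow a l) := by
  intro i j hij
  obtain hj | hj := lt_or_ge j a
  · rw [flattenBelow_of_lt hj, flattenBelow_of_lt (hij.trans_lt hj)]
  rw [flattenBelow_of_le hj]
  obtain hi | hi := lt_or_ge i a
  · rw [flattenBelow_of_lt hi]
    exact (expect_Iio_le_of_covBy hl hba).trans (hl (hba.le.trans hj))
  · rw [flattenBelow_of_le hi]
    exact hl hij

end Flatten

section Frobenius

open scoped Matrix.Norms.Frobenius

variable {ι κ 𝕜 : Type*} [Fintype ι] [Fintype κ] [RCLike 𝕜]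

theorem frobenius_norm_sq (A : Matrix ι κ 𝕜) : ‖A‖ ^ 2 = ∑ i, ∑ j, ‖A i j‖ ^ 2 := by
  rw [frobenius_norm_def, ← Real.sqrt_eq_rpow, Real.sq_sqrt (by positivity)]
  simp only [Real.rpow_two]

theorem frobenius_norm_sq_eq_trace (A : Matrix ι κ 𝕜) :
    ((‖A‖ ^ 2 : ℝ) : 𝕜) = (Aᴴ * A).trace := by
  rw [frobenius_norm_sq, Finset.sum_comm]
  simp only [trace, diag, mul_apply, conjTranspose_apply, RCLike.star_def, RCLike.conj_mul]
  push_cast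
  rfl

theorem frobenius_norm_unitary_mul [DecidableEq ι] (U : unitaryGroup ι 𝕜) (A : Matrix ι κ 𝕜) :
    ‖(U : Matrix ι ι 𝕜) * A‖ = ‖A‖ := by
  have hU : (U : Matrix ι ι 𝕜)ᴴ * U = 1 := mem_unitaryGroup_iff'.mp U.2
  have hsq : ((‖(U : Matrix ι ι 𝕜) * A‖ ^ 2 : ℝ) : 𝕜) = (‖A‖ ^ 2 : ℝ) := by
    rw [frobenius_norm_sq_eq_trace, frobenius_norm_sq_eq_trace, conjTranspose_mul,
      Matrix.mul_assoc, ← Matrix.mul_assoc _ _ A, hU, Matrix.one_mul]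
  exact (sq_eq_sq₀ (norm_nonneg _) (norm_nonneg _)).mp (RCLike.ofReal_injective hsq)

theorem frobenius_norm_mul_unitary [DecidableEq κ] (A : Matrix ι κ 𝕜) (U : unitaryGroup κ 𝕜) :
    ‖A * (U : Matrix κ κ 𝕜)‖ = ‖A‖ := by
  rw [← frobenius_norm_conjTranspose, conjTranspose_mul, ← star_eq_conjTranspose (U : Matrix κ κ 𝕜),
    ← Unitary.coe_star, frobenius_norm_unitary_mul, frobenius_norm_conjTranspose]

theorem frobNorm_eq_norm {n : ℕ} (A : Matrix (Fin n) (Fin n) ℂ) : frobNorm A = ‖A‖ := by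
  rw [frobNorm, ← frobenius_norm_sq, Real.sqrt_sq (norm_nonneg _)]

end Frobenius

section SpectralMatrix

variable {ι 𝕜 : Type*} [Fintype ι] [DecidableEq ι] [RCLike 𝕜]

/-- The Hermitian matrix with eigenvalues `a`, whose eigenvectors are the columns of `U`. -/
def spectralMatrix (U : unitaryGroup ι 𝕜) (a : ι → ℝ) : Matrix ι ι 𝕜 :=
  (U : Matrix ι ι 𝕜) * diagonal (RCLike.ofReal ∘ a) * star (U : Matrix ι ι 𝕜)

/-- The doubly stochastic matrix of squared overlaps between the columns of `U` and of `V`. -/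
def overlap (U V : unitaryGroup ι 𝕜) : Matrix ι ι ℝ :=
  of fun i j ↦ ‖(star U * V) i j‖ ^ 2

theorem overlap_self (U : unitaryGroup ι 𝕜) : overlap U U = 1 := by
  ext i j
  obtain rfl | h := eq_or_ne i j <;> simp [overlap, one_apply, *]

theorem sum_norm_sq_row_unitary (U : unitaryGroup ι 𝕜) (i : ι) : ∑ j, ‖U i j‖ ^ 2 = 1 := by
  have h := congr_fun₂ (mem_unitaryGroup_iff.mp U.2) i i
  simp only [mul_apply, star_apply, RCLike.star_def, RCLike.mul_conj, one_apply_eq] at h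
  exact_mod_cast h

theorem overlap_mem_doublyStochastic (U V : unitaryGroup ι 𝕜) :
    overlap U V ∈ doublyStochastic ℝ ι := by
  refine mem_doublyStochastic_iff_sum.mpr ⟨fun i j ↦ sq_nonneg _, sum_norm_sq_row_unitary _,
    fun j ↦ ?_⟩
  rw [← sum_norm_sq_row_unitary (star (star U * V)) j]
  exact Finset.sum_congr rfl fun i _ ↦ congrArg (· ^ 2) (norm_star ((star U * V) i j)).symm

theorem spectralMatrix_eq_mul_inv (U : unitaryGroup ι 𝕜) (a : ι → ℝ) :
    spectralMatrix U a
      = (U : Matrix ι ι 𝕜) * diagonal (RCLike.ofReal ∘ a) * (U : Matrix ι ι 𝕜)⁻¹ := by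
  rw [inv_eq_right_inv (Unitary.mul_star_self_of_mem U.2), spectralMatrix]

theorem eq_spectralMatrix_of_inv_mul_mul_eq_diagonal {U : unitaryGroup ι 𝕜} {A : Matrix ι ι 𝕜}
    {a : ι → ℝ}
    (h : (U : Matrix ι ι 𝕜)⁻¹ * A * (U : Matrix ι ι 𝕜) = diagonal (RCLike.ofReal ∘ a)) :
    A = spectralMatrix U a := by
  have hU : IsUnit (U : Matrix ι ι 𝕜).det := UnitaryGroup.det_isUnit U
  rw [spectralMatrix_eq_mul_inv, ← h, Matrix.mul_assoc, mul_nonsing_inv_cancel_right _ _ hU,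
    mul_nonsing_inv_cancel_left _ _ hU]

theorem isHermitian_spectralMatrix (U : unitaryGroup ι 𝕜) (a : ι → ℝ) :
    (spectralMatrix U a).IsHermitian := by
  rw [spectralMatrix, star_eq_conjTranspose]
  refine isHermitian_mul_mul_conjTranspose _ ?_
  exact isHermitian_diagonal_iff.mpr fun i ↦ RCLike.conj_ofReal _

theorem charpoly_spectralMatrix (U : unitaryGroup ι 𝕜) (a : ι → ℝ) :
    (spectralMatrix U a).charpoly = ∏ i, (Polynomial.X - Polynomial.C (a i : 𝕜)) := by
  rw [spectralMatrix, charpoly_mul_comm, ← Matrix.mul_assoc,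
    Unitary.coe_star_mul_self, Matrix.one_mul, charpoly_diagonal]
  rfl

theorem map_eigenvalues_spectralMatrix (U : unitaryGroup ι 𝕜) (a : ι → ℝ) :
    Finset.univ.val.map (isHermitian_spectralMatrix U a).eigenvalues = Finset.univ.val.map a := by
  refine Multiset.map_injective (RCLike.ofReal_injective (K := 𝕜)) ?_
  rw [Multiset.map_map, ← (isHermitian_spectralMatrix U a).roots_charpoly_eq_eigenvalues,
    charpoly_spectralMatrix, Polynomial.roots_prod _ _
      (Finset.prod_ne_zero_iff.mpr fun i _ ↦ Polynomial.X_sub_C_ne_zero _)]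
  simp only [Polynomial.roots_X_sub_C, Multiset.bind_singleton, Multiset.map_map,
    Function.comp_def]

theorem exists_spectralMatrix_comp_perm (U : unitaryGroup ι 𝕜) (a : ι → ℝ) (σ : Equiv.Perm ι) :
    ∃ V : unitaryGroup ι 𝕜, spectralMatrix V (a ∘ σ) = spectralMatrix U a := by
  set P : Matrix ι ι 𝕜 := (U : Matrix ι ι 𝕜).submatrix id σ
  have hstar : star P = (star (U : Matrix ι ι 𝕜)).submatrix σ id :=
    conjTranspose_submatrix _ _ _
  have hunitary : P ∈ unitaryGroup ι 𝕜 := by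
    rw [mem_unitaryGroup_iff, hstar, submatrix_mul_equiv, submatrix_id_id,
      Unitary.mul_star_self_of_mem U.2]
  refine ⟨⟨P, hunitary⟩, ?_⟩
  rw [spectralMatrix, hstar, ← Function.comp_assoc, ← submatrix_diagonal_equiv,
    submatrix_mul_equiv, submatrix_mul_equiv, submatrix_id_id, spectralMatrix]

section Norm

open scoped Matrix.Norms.Frobenius

theorem norm_spectralMatrix_sub_sq (U V : unitaryGroup ι 𝕜) (a b : ι → ℝ) :
    ‖spectralMatrix U a - spectralMatrix V b‖ ^ 2
      = a ⬝ᵥ a + b ⬝ᵥ b - 2 * (a ⬝ᵥ overlap U V *ᵥ b) := by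
  rw [← sum_sum_mul_sub_sq_of_mem_doublyStochastic (overlap_mem_doublyStochastic U V),
    ← frobenius_norm_unitary_mul (star U), ← frobenius_norm_mul_unitary _ V, frobenius_norm_sq]
  have hconj : (↑(star U) : Matrix ι ι 𝕜) * (spectralMatrix U a - spectralMatrix V b)
        * (V : Matrix ι ι 𝕜)
      = diagonal (RCLike.ofReal ∘ a) * (star U * V : Matrix ι ι 𝕜)
        - (star U * V : Matrix ι ι 𝕜) * diagonal (RCLike.ofReal ∘ b) := by
    simp only [spectralMatrix, Matrix.mul_sub, Matrix.sub_mul, Matrix.mul_assoc, Unitary.coe_star,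
      Unitary.star_mul_self_of_mem V.2, Matrix.mul_one]
    simp only [← Matrix.mul_assoc, Unitary.star_mul_self_of_mem U.2, Matrix.one_mul]
  refine Finset.sum_congr rfl fun i _ ↦ Finset.sum_congr rfl fun j _ ↦ ?_
  rw [hconj, Matrix.sub_apply, diagonal_mul, mul_diagonal, mul_comm, ← mul_sub, norm_mul, mul_pow,
    Function.comp_apply, Function.comp_apply, ← RCLike.ofReal_sub, RCLike.norm_ofReal, sq_abs]
  rfl

theorem norm_spectralMatrix_sub_sq_add_le (U V : unitaryGroup ι 𝕜) {l s m : ι → ℝ} {ε : ℝ}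
    (hε : ε ≤ 1) (hmono : Monovary (l - ε • s) m) (horth : (l - s) ⬝ᵥ (s - m) = 0) :
    ‖spectralMatrix U l - spectralMatrix U s‖ ^ 2
        + ε * ‖spectralMatrix U s - spectralMatrix V m‖ ^ 2
      ≤ ‖spectralMatrix U l - spectralMatrix V m‖ ^ 2 := by
  have hrearr := dotProduct_mulVec_le_of_monovary (overlap_mem_doublyStochastic U V) hmono
  have hslack : 0 ≤ (1 - ε) * ((s - m) ⬝ᵥ (s - m)) :=
    mul_nonneg (sub_nonneg.mpr hε) (dotProduct_star_self_nonneg (s - m))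
  simp only [sub_dotProduct, dotProduct_sub, smul_dotProduct, smul_eq_mul, dotProduct_comm m]
    at hrearr hslack horth
  simp only [norm_spectralMatrix_sub_sq, overlap_self, one_mulVec]
  linarith

end Norm

end SpectralMatrix

section Eigs

variable {n : ℕ}

theorem eq_of_monotone_of_map_univ_eq {α : Type*} [PartialOrder α] {f g : Fin n → α}
    (hf : Monotone f) (hg : Monotone g)
    (h : Finset.univ.val.map f = Finset.univ.val.map g) : f = g := by
  rw [Fin.univ_val_map, Fin.univ_val_map, Multiset.coe_eq_coe] at h
  exact List.ofFn_injective (h.eq_of_sortedLE hf.sortedLE_ofFn hg.sortedLE_ofFn)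

theorem eigs_of_isHermitian {H : Matrix (Fin n) (Fin n) ℂ} (hH : H.IsHermitian) :
    eigs H = hH.eigenvalues ∘ Tuple.sort hH.eigenvalues :=
  dif_pos hH

theorem monotone_eigs (H : Matrix (Fin n) (Fin n) ℂ) : Monotone (eigs H) := by
  unfold eigs
  split_ifs with hH
  · exact Tuple.monotone_sort _
  · exact monotone_const

theorem eigs_spectralMatrix (U : unitaryGroup (Fin n) ℂ) {a : Fin n → ℝ} (ha : Monotone a) :
    eigs (spectralMatrix U a) = a := by
  refine eq_of_monotone_of_map_univ_eq (monotone_eigs _) ha ?_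
  rw [eigs_of_isHermitian (isHermitian_spectralMatrix U a), ← Multiset.map_map,
    Multiset.map_univ_val_equiv, map_eigenvalues_spectralMatrix]

theorem exists_eq_spectralMatrix_eigs {H : Matrix (Fin n) (Fin n) ℂ} (hH : H.IsHermitian) :
    ∃ U : unitaryGroup (Fin n) ℂ, H = spectralMatrix U (eigs H) := by
  obtain ⟨U, hU⟩ := exists_spectralMatrix_comp_perm hH.eigenvectorUnitary hH.eigenvalues
    (Tuple.sort hH.eigenvalues)
  refine ⟨U, ?_⟩
  rw [eigs_of_isHermitian hH, hU, spectralMatrix, ← Unitary.conjStarAlgAut_apply (S := ℂ)]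
  exact hH.spectral_theorem

end Eigs

section HSigma

variable {n k : ℕ}

theorem lamBar_eq_expect (hkn : k < n) (H : Matrix (Fin n) (Fin n) ℂ) :
    lamBar k H = 𝔼 j ∈ Finset.Iio ⟨k, hkn⟩, eigs H j := by
  rw [Finset.expect_eq_sum_div_card, Fin.card_Iio, lamBar, ← Finset.sum_filter]
  congr 2
  ext j
  simp [Fin.lt_def]

theorem LambdaSigma_eq_diagonal_flattenBelow (hkn : k < n) (H : Matrix (Fin n) (Fin n) ℂ) :
    LambdaSigma k H = diagonal (RCLike.ofReal ∘ flattenBelow ⟨k, hkn⟩ (eigs H)) := by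
  rw [LambdaSigma, lamBar_eq_expect hkn]
  congr 1
  ext i
  exact (apply_ite RCLike.ofReal _ _ _).symm

theorem spectralMatrix_flattenBelow_mem_sigmaSet (U : unitaryGroup (Fin n) ℂ) {l : Fin n → ℝ}
    (hl : Monotone l) (hkn : k < n) {b : Fin n} (hb : b ⋖ ⟨k, hkn⟩) (hgap : l b < l ⟨k, hkn⟩) :
    spectralMatrix U (flattenBelow ⟨k, hkn⟩ l) ∈ SigmaSet n k := by
  refine ⟨isHermitian_spectralMatrix _ _, fun i j hi hj ↦ ?_, fun i j hi hj ↦ ?_⟩ <;>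
    rw [eigs_spectralMatrix U (monotone_flattenBelow hl hb)]
  · rw [flattenBelow_of_lt (Fin.lt_def.mpr hi), flattenBelow_of_lt (Fin.lt_def.mpr hj)]
  · obtain rfl : j = ⟨k, hkn⟩ := Fin.ext hj
    rw [flattenBelow_of_lt (Fin.lt_def.mpr hi), flattenBelow_of_le le_rfl]
    exact (expect_Iio_le_of_covBy hl hb).trans_lt hgap

open scoped Matrix.Norms.Frobenius in
theorem frobNorm_sub_flattenBelow_lt (U : unitaryGroup (Fin n) ℂ) {l : Fin n → ℝ}
    (hl : Monotone l) {a b : Fin n} (hba : b ⋖ a) (hgap : l b < l a)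
    {G : Matrix (Fin n) (Fin n) ℂ} (hG : G.IsHermitian)
    (hGeq : ∀ i < a, ∀ j < a, eigs G i = eigs G j)
    (hne : G ≠ spectralMatrix U (flattenBelow a l)) :
    frobNorm (spectralMatrix U l - spectralMatrix U (flattenBelow a l))
      < frobNorm (spectralMatrix U l - G) := by
  obtain ⟨ε, ⟨hε₀, hε₁⟩, hmono⟩ := exists_monotone_sub_smul_flattenBelow hl hba hgap
  obtain ⟨V, hV⟩ := exists_eq_spectralMatrix_eigs hG
  have horth : (l - flattenBelow a l) ⬝ᵥ (flattenBelow a l - eigs G) = 0 := by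
    refine sub_flattenBelow_dotProduct_eq_zero (c := flattenBelow a l b - eigs G b) fun i hi ↦ ?_
    rw [Pi.sub_apply, flattenBelow_of_lt hi, flattenBelow_of_lt hba.lt, hGeq i hi b hba.lt]
  have hstab := norm_spectralMatrix_sub_sq_add_le U V hε₁ (hmono.monovary (monotone_eigs G)) horth
  have hpos : 0 < ‖spectralMatrix U (flattenBelow a l) - G‖ := norm_sub_pos_iff.mpr hne.symm
  rw [← hV] at hstab
  rw [frobNorm_eq_norm, frobNorm_eq_norm]
  exact lt_of_pow_lt_pow_left₀ 2 (norm_nonneg _) (by linarith [mul_pos hε₀ (pow_pos hpos 2)])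

end HSigma

theorem HSigma_unique_closest_general {n k : ℕ} (hkn : k < n) (H : Matrix (Fin n) (Fin n) ℂ)
    (hgap : eigs H ⟨k - 1, by omega⟩ < eigs H ⟨k, hkn⟩)
    (U : Matrix (Fin n) (Fin n) ℂ) (hU : U ∈ Matrix.unitaryGroup (Fin n) ℂ)
    (hdiag : U⁻¹ * H * U = Matrix.diagonal fun i => (eigs H i : ℂ)) :
    U * LambdaSigma k H * U⁻¹ ∈ SigmaSet n k ∧
    ∀ G : Matrix (Fin n) (Fin n) ℂ, G.IsHermitian →
      (∀ i j : Fin n, (i : ℕ) < k → (j : ℕ) < k → eigs G i = eigs G j) →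
      G ≠ U * LambdaSigma k H * U⁻¹ →
      frobNorm (H - U * LambdaSigma k H * U⁻¹) < frobNorm (H - G) := by
  lift U to unitaryGroup (Fin n) ℂ using hU
  have hH : H = spectralMatrix U (eigs H) := eq_spectralMatrix_of_inv_mul_mul_eq_diagonal hdiag
  have hHSigma : U * LambdaSigma k H * (U : Matrix (Fin n) (Fin n) ℂ)⁻¹
      = spectralMatrix U (flattenBelow ⟨k, hkn⟩ (eigs H)) := by
    rw [spectralMatrix_eq_mul_inv, LambdaSigma_eq_diagonal_flattenBelow hkn]
  have hcov : (⟨k - 1, by omega⟩ : Fin n) ⋖ ⟨k, hkn⟩ := by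
    have hk : k ≠ 0 := by rintro rfl; exact hgap.false
    rw [Fin.covBy_iff, Nat.covBy_iff_add_one_eq]
    exact Nat.succ_pred hk
  rw [hHSigma]
  refine ⟨spectralMatrix_flattenBelow_mem_sigmaSet U (monotone_eigs H) hkn hcov hgap,
    fun G hG hGeq hne ↦ ?_⟩
  have hlt := frobNorm_sub_flattenBelow_lt U (monotone_eigs H) hcov hgap hG
    (fun i hi j hj ↦ hGeq i j hi hj) hne
  rwa [← hH] at hlt

/-- **`H_Σ` is the unique closest point of Σ_k to `H`:** `H_Σ ∈ Σ_k`, and every other point of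
`Σ_k` is strictly farther from `H` in Frobenius distance. -/
theorem HSigma_unique_closest {n k : ℕ} (hk2 : 2 ≤ k) (hkn : k < n)
    (H : Matrix (Fin n) (Fin n) ℂ) (hH : H.IsHermitian)
    (hgap : eigs H ⟨k - 1, by omega⟩ < eigs H ⟨k, hkn⟩)
    (U : Matrix (Fin n) (Fin n) ℂ) (hU : U ∈ Matrix.unitaryGroup (Fin n) ℂ)
    (hdiag : U⁻¹ * H * U = Matrix.diagonal fun i => (eigs H i : ℂ)) :
    U * LambdaSigma k H * U⁻¹ ∈ SigmaSet n k ∧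
    ∀ G ∈ SigmaSet n k, G ≠ U * LambdaSigma k H * U⁻¹ →
      frobNorm (H - U * LambdaSigma k H * U⁻¹) < frobNorm (H - G) := by
  obtain ⟨hmem, hlt⟩ := HSigma_unique_closest_general hkn H hgap U hU hdiag
  exact ⟨hmem, fun G hG hne ↦ hlt G hG.1 hG.2.1 hne⟩

end
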